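/- (Thermodynamic limit of the correlation kernel on the continuum) Let g : ℝ → ℝ be an even Schwartz function whose Fourier transform λ^∞(s) := ∫_{−∞}^∞ g(t) e^{2πist} dt satisfies λ^∞(s) ≥ 0 for all s, and let z > 0. For L > 0 and p ∈ ℤ set λ_p^{(L)} := L ∫_{−1/2}^{1/2} g( (L/π) sin(πt) ) e^{2πipt} dt, and assume 1 + z λ_p^{(L)} > 0 for all L > 0 and p ∈ ℤ. Then for all real X, Y: lim_{L→∞} (z/L) Σ_{p∈ℤ} e^{2πi(Y−X)p/L} λ_p^{(L)} / (1 + z λ_p^{(L)}) = z ∫_{−∞}^∞ e^{2πi(Y−X)s} λ^∞(s) / (1 + z λ^∞(s)) ds. -/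

import Mathlib

/-!
With `h_L(u) = g((L/π) sin(πu/L))`, the substitution `u = Lt` gives
`λ_p^{(L)} = ∫_{-L/2}^{L/2} h_L(u) e^{2πi(p/L)u} du`, and the normalised sum `(1/L) Σ_p` is the
integral over `s` of its summand at `p = ⌊Ls⌋` (`integral_floor`). The limit is then taken by
dominated convergence in `s`, which rests on two facts.

* `|λ_p^{(L)} - λ^∞(p/L)|` is at most the `L¹` distance between `h_L 1_{(-L/2, L/2]}` and `g`
  (`norm_truncCoeff_sub_le`), which tends to `0` (`tendsto_windowed_L1`). With the continuity of
  `λ^∞` this gives pointwise convergence of the integrand. As the estimate is uniform in `p` and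
  `λ^∞ ≥ 0`, it also gives `1 + zλ_p^{(L)} ≥ 1/2` for all `p` once `L` is large.
* `|λ_p^{(L)}| (1 + (p/L)²)` is bounded uniformly in `p` and `L ≥ 1` (`truncCoeff_decay`): integrate
  by parts twice, using that `h_L` is `L`-periodic because `g` is even, and that
  `|(L/π) sin(πu/L)| ≥ (2/π)|u|` on the period, so that `h_L` and `h_L''` decay quadratically with
  constants independent of `L`.
-/

open MeasureTheory Filter Topology

/-! ### Chord length, characters and Fourier integrals over a period -/

/-- The signed chord length `(L/π) sin(πu/L)` on the circle of circumference `L`, `u` being the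
arc length. -/
noncomputable def chord (L u : ℝ) : ℝ := L / Real.pi * Real.sin (Real.pi * (u / L))

/-- The character `e^{2πisu}`. -/
noncomputable def wave (s u : ℝ) : ℂ := Complex.exp (2 * Real.pi * Complex.I * (s : ℂ) * (u : ℂ))

/-- The integral of `f(u) e^{2πisu}` over one period `[-L/2, L/2]`. -/
noncomputable def truncCoeff (f : ℝ → ℝ) (L s : ℝ) : ℂ :=
  ∫ u in (-(L / 2))..(L / 2), (f u : ℂ) * wave s u

lemma norm_wave (s u : ℝ) : ‖wave s u‖ = 1 := by
  have : (2 * Real.pi * Complex.I * (s : ℂ) * (u : ℂ)) =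
      ((2 * Real.pi * s * u : ℝ) : ℂ) * Complex.I := by push_cast; ring
  rw [wave, this, Complex.norm_exp_ofReal_mul_I]

lemma continuous_wave_left (s : ℝ) : Continuous (wave s) := by
  unfold wave
  fun_prop

lemma continuous_chord (L : ℝ) : Continuous (chord L) := by
  unfold chord
  fun_prop

lemma hasDerivAt_wave (s u : ℝ) :
    HasDerivAt (wave s) (2 * Real.pi * Complex.I * s * wave s u) u := by
  have h := (((Complex.ofRealCLM.hasDerivAt (x := u)).const_mul
    (2 * Real.pi * Complex.I * (s : ℂ)))).cexp
  simp only [Complex.ofRealCLM_apply, Complex.ofReal_one, mul_one] at h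
  rw [mul_comm]
  exact h

/-- Quadratic decay, in the form used for every domination below. -/
lemma schwartz_bound (f : SchwartzMap ℝ ℝ) :
    ∃ C : ℝ, 0 < C ∧ ∀ x, |f x| * (1 + x ^ 2) ≤ C := by
  obtain ⟨C₀, h₀, H₀⟩ := f.decay 0 0
  obtain ⟨C₂, h₂, H₂⟩ := f.decay 2 0
  refine ⟨C₀ + C₂, by positivity, fun x => ?_⟩
  have a := H₀ x
  have b := H₂ x
  simp only [pow_zero, one_mul, norm_iteratedFDeriv_zero, Real.norm_eq_abs, sq_abs] at a b
  nlinarith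

lemma le_abs_chord {L u : ℝ} (hL : 0 < L) (hu : |u| ≤ L / 2) :
    2 / Real.pi * |u| ≤ |chord L u| := by
  have hpi := Real.pi_pos
  have h1 : |Real.pi * (u / L)| ≤ Real.pi / 2 := by
    rw [abs_mul, abs_div, abs_of_pos hpi, abs_of_pos hL]
    have : |u| / L ≤ 1 / 2 := by rw [div_le_iff₀ hL]; linarith
    nlinarith
  have h2 := Real.mul_abs_le_abs_sin h1
  rw [abs_mul, abs_div, abs_of_pos hpi, abs_of_pos hL] at h2
  rw [chord, abs_mul, abs_div, abs_of_pos hpi, abs_of_pos hL]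
  calc 2 / Real.pi * |u| = L / Real.pi * (2 / Real.pi * (Real.pi * (|u| / L))) := by
        field_simp
    _ ≤ _ := by gcongr

/-- Quadratic decay survives composition with `chord L` on one period, with a constant independent
of `L`: by Jordan's inequality `|chord L u| ≥ (2/π)|u| ≥ |u|/2` there. -/
lemma comp_chord_bound {f : ℝ → ℝ} {C : ℝ} (hf : ∀ x, |f x| * (1 + x ^ 2) ≤ C)
    {L u : ℝ} (hL : 0 < L) (hu : |u| ≤ L / 2) :
    |f (chord L u)| ≤ 4 * C * (1 + u ^ 2)⁻¹ := by
  have hpi := Real.pi_pos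
  have h1 := le_abs_chord hL hu
  have h2 : 1 / 2 * |u| ≤ |chord L u| := by
    refine le_trans ?_ h1
    refine mul_le_mul_of_nonneg_right ?_ (abs_nonneg u)
    rw [div_le_div_iff₀ (by norm_num) hpi]
    linarith [Real.pi_le_four]
  have h3 : u ^ 2 ≤ 4 * chord L u ^ 2 := by
    rw [← sq_abs u, ← sq_abs (chord L u)]
    nlinarith [abs_nonneg u]
  have h4 := hf (chord L u)
  rw [← div_eq_mul_inv, le_div_iff₀ (by positivity)]
  nlinarith [abs_nonneg (f (chord L u))]

lemma norm_truncCoeff_le {f : ℝ → ℝ} {C L : ℝ} (hL : 0 < L) (hC : 0 ≤ C)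
    (hf : ∀ u, |u| ≤ L / 2 → |f u| ≤ C * (1 + u ^ 2)⁻¹) (s : ℝ) :
    ‖truncCoeff f L s‖ ≤ C * Real.pi := by
  have hle : -(L / 2) ≤ L / 2 := by linarith
  have hint : Integrable fun u : ℝ => C * (1 + u ^ 2)⁻¹ := integrable_inv_one_add_sq.const_mul C
  calc ‖truncCoeff f L s‖ ≤ ∫ u in (-(L / 2))..(L / 2), C * (1 + u ^ 2)⁻¹ := by
        refine intervalIntegral.norm_integral_le_of_norm_le hle ?_ hint.intervalIntegrable
        refine Eventually.of_forall fun u hu => ?_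
        rw [norm_mul, norm_wave, mul_one, Complex.norm_real]
        exact hf u (abs_le.2 ⟨hu.1.le, hu.2⟩)
    _ ≤ ∫ u, C * (1 + u ^ 2)⁻¹ := by
        rw [intervalIntegral.integral_of_le hle]
        exact setIntegral_le_integral hint (Eventually.of_forall fun u => by positivity)
    _ = C * Real.pi := by rw [integral_const_mul, integral_univ_inv_one_add_sq]

/-! ### Uniform decay of the eigenvalues -/

/-- Integration by parts over one period; the boundary terms cancel by periodicity. -/
lemma truncCoeff_deriv {f f' : ℝ → ℝ} {L s : ℝ} (hf : ∀ u, HasDerivAt f (f' u) u)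
    (hf' : Continuous f') (hper : f (L / 2) = f (-(L / 2)))
    (hw : wave s (L / 2) = wave s (-(L / 2))) :
    truncCoeff f' L s = -(2 * Real.pi * Complex.I * s * truncCoeff f L s) := by
  have hc : Continuous f := continuous_iff_continuousAt.2 fun u => (hf u).continuousAt
  have h := intervalIntegral.integral_mul_deriv_eq_deriv_mul (a := -(L / 2)) (b := L / 2)
    (u := fun u => (f u : ℂ)) (u' := fun u => (f' u : ℂ)) (v := wave s)
    (v' := fun u => 2 * Real.pi * Complex.I * s * wave s u)
    (fun u _ => (hf u).ofReal_comp) (fun u _ => hasDerivAt_wave s u)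
    (Continuous.intervalIntegrable (by fun_prop) _ _)
    (Continuous.intervalIntegrable (continuous_const.mul (continuous_wave_left s)) _ _)
  rw [hper, hw, sub_self, zero_sub] at h
  unfold truncCoeff
  rw [← intervalIntegral.integral_const_mul]
  rw [← neg_eq_iff_eq_neg, ← h]
  congr 1
  ext u
  ring

lemma wave_period (L : ℝ) (hL : 0 < L) (p : ℤ) :
    wave (p / L) (L / 2) = wave (p / L) (-(L / 2)) := by
  unfold wave
  have hL' : (L : ℂ) ≠ 0 := by exact_mod_cast hL.ne'
  rw [Complex.exp_eq_exp_iff_exists_int]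
  refine ⟨p, ?_⟩
  push_cast
  field_simp
  ring

lemma hasDerivAt_chord {L : ℝ} (hL : 0 < L) (u : ℝ) :
    HasDerivAt (chord L) (Real.cos (Real.pi * (u / L))) u := by
  have h := ((((hasDerivAt_id u).div_const L).const_mul Real.pi).sin).const_mul (L / Real.pi)
  refine h.congr_deriv ?_
  have := Real.pi_pos
  simp only [id]
  field_simp

lemma hasDerivAt_cos_chord (L u : ℝ) :
    HasDerivAt (fun u => Real.cos (Real.pi * (u / L)))
      (-(Real.pi / L * Real.sin (Real.pi * (u / L)))) u := by
  have h := ((((hasDerivAt_id u).div_const L).const_mul Real.pi).cos)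
  refine h.congr_deriv ?_
  simp only [id]
  ring

/-- Decay of the eigenvalues like `(1 + (p/L)²)⁻¹`, uniformly in `L ≥ 1`, by two integrations by
parts. Evenness of `g` makes `g ∘ chord L` periodic; its derivative vanishes at `±L/2`. -/
lemma truncCoeff_decay (g : SchwartzMap ℝ ℝ) (hg : ∀ u : ℝ, g (-u) = g u) :
    ∃ K : ℝ, 0 < K ∧ ∀ L : ℝ, 1 ≤ L → ∀ p : ℤ,
      ‖truncCoeff (fun u => g (chord L u)) L (p / L)‖ * (1 + ((p : ℝ) / L) ^ 2) ≤ K := by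
  set g₁ := SchwartzMap.derivCLM ℝ ℝ g with hg₁
  set g₂ := SchwartzMap.derivCLM ℝ ℝ g₁ with hg₂
  have hd₀ : ∀ x, HasDerivAt g (g₁ x) x := fun x => by
    rw [hg₁, SchwartzMap.derivCLM_apply]
    exact g.differentiable.differentiableAt.hasDerivAt
  have hd₁ : ∀ x, HasDerivAt g₁ (g₂ x) x := fun x => by
    rw [hg₂, SchwartzMap.derivCLM_apply]
    exact g₁.differentiable.differentiableAt.hasDerivAt
  obtain ⟨C₀, hC₀, H₀⟩ := schwartz_bound g
  obtain ⟨C₁, hC₁, H₁⟩ := schwartz_bound g₁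
  obtain ⟨C₂, hC₂, H₂⟩ := schwartz_bound g₂
  have hpi := Real.pi_pos
  refine ⟨4 * C₀ * Real.pi + (4 * C₂ + Real.pi * (4 * C₁)) * Real.pi, by positivity,
    fun L hL1 p => ?_⟩
  have hL : 0 < L := by linarith
  set s : ℝ := p / L with hs
  set h₀ : ℝ → ℝ := fun u => g (chord L u) with hh₀
  set h₁ : ℝ → ℝ := fun u => g₁ (chord L u) * Real.cos (Real.pi * (u / L)) with hh₁
  set h₂ : ℝ → ℝ := fun u => g₂ (chord L u) * Real.cos (Real.pi * (u / L)) *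
    Real.cos (Real.pi * (u / L)) +
      g₁ (chord L u) * (-(Real.pi / L * Real.sin (Real.pi * (u / L)))) with hh₂
  have D₀ : ∀ u, HasDerivAt h₀ (h₁ u) u := fun u =>
    HasDerivAt.comp u (hd₀ _) (hasDerivAt_chord hL u)
  have D₁ : ∀ u, HasDerivAt h₁ (h₂ u) u := fun u =>
    (HasDerivAt.comp u (hd₁ _) (hasDerivAt_chord hL u)).mul (hasDerivAt_cos_chord L u)
  have hch := continuous_chord L
  have c₁ : Continuous h₁ := continuous_iff_continuousAt.2 fun u => (D₁ u).continuousAt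
  have c₂ : Continuous h₂ := by
    have := g₁.continuous
    have := g₂.continuous
    fun_prop
  have e1 : Real.pi * (L / 2 / L) = Real.pi / 2 := by field_simp
  have e2 : Real.pi * (-(L / 2) / L) = -(Real.pi / 2) := by field_simp
  have P₀ : h₀ (L / 2) = h₀ (-(L / 2)) := by
    simp only [hh₀, chord, e1, e2, Real.sin_neg, mul_neg, hg]
  have P₁ : h₁ (L / 2) = h₁ (-(L / 2)) := by
    simp only [hh₁, e1, e2, Real.cos_neg, Real.cos_pi_div_two, mul_zero]
  have hw := wave_period L hL p
  have E₀ := truncCoeff_deriv D₀ c₁ P₀ hw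
  have E₁ := truncCoeff_deriv D₁ c₂ P₁ hw
  have B₀ : ‖truncCoeff h₀ L s‖ ≤ 4 * C₀ * Real.pi :=
    norm_truncCoeff_le hL (by positivity) (fun u hu => comp_chord_bound H₀ hL hu) s
  have B₂ : ‖truncCoeff h₂ L s‖ ≤ (4 * C₂ + Real.pi * (4 * C₁)) * Real.pi := by
    refine norm_truncCoeff_le hL (by positivity) (fun u hu => ?_) s
    have b1 := comp_chord_bound H₁ hL hu
    have b2 := comp_chord_bound H₂ hL hu
    have hc := Real.abs_cos_le_one (Real.pi * (u / L))
    have hsn := Real.abs_sin_le_one (Real.pi * (u / L))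
    have hpl : Real.pi / L ≤ Real.pi := div_le_self hpi.le hL1
    calc |h₂ u| ≤ |g₂ (chord L u)| * |Real.cos (Real.pi * (u / L))| *
          |Real.cos (Real.pi * (u / L))| +
          |g₁ (chord L u)| * (Real.pi / L * |Real.sin (Real.pi * (u / L))|) := by
          refine (abs_add_le _ _).trans (le_of_eq ?_)
          simp only [abs_mul, abs_neg, abs_div, abs_of_pos hpi, abs_of_pos hL]
      _ ≤ (4 * C₂ * (1 + u ^ 2)⁻¹) * 1 * 1 + (4 * C₁ * (1 + u ^ 2)⁻¹) * (Real.pi * 1) := by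
          gcongr
      _ = _ := by ring
  have E : ‖truncCoeff h₂ L s‖ = (2 * Real.pi) ^ 2 * s ^ 2 * ‖truncCoeff h₀ L s‖ := by
    rw [E₁, E₀]
    simp only [norm_neg, norm_mul, Complex.norm_I, Complex.norm_real, Complex.norm_ofNat,
      Real.norm_eq_abs, abs_of_pos hpi, ← hs]
    rw [← sq_abs s]
    ring
  have hbig : 1 ≤ (2 * Real.pi) ^ 2 := by nlinarith [Real.pi_gt_three]
  have hn := norm_nonneg (truncCoeff h₀ L s)
  have : s ^ 2 * ‖truncCoeff h₀ L s‖ ≤ ‖truncCoeff h₂ L s‖ := by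
    rw [E, mul_assoc]
    exact le_mul_of_one_le_left (by positivity) hbig
  linarith

/-! ### Convergence of the eigenvalues to the Fourier transform -/

lemma tendsto_chord (u : ℝ) : Tendsto (fun L => chord L u) atTop (𝓝 u) := by
  have h : Tendsto (fun L : ℝ => u * Real.sinc (Real.pi * (u / L))) atTop
      (𝓝 (u * Real.sinc (Real.pi * 0))) :=
    ((Real.continuous_sinc.tendsto _).comp
      ((tendsto_const_nhds.div_atTop tendsto_id).const_mul Real.pi)).const_mul u
  rw [mul_zero, Real.sinc_zero, mul_one] at h
  refine h.congr' ?_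
  filter_upwards [eventually_gt_atTop 0] with L hL
  rcases eq_or_ne u 0 with rfl | hu
  · simp [chord]
  · have hpi := Real.pi_pos
    rw [Real.sinc_of_ne_zero (by positivity), chord]
    field_simp

/-- The function `g ∘ chord L` cut off to one period, viewed as a function on the whole line. -/
noncomputable def windowed (g : ℝ → ℝ) (L : ℝ) : ℝ → ℝ :=
  (Set.Ioc (-(L / 2)) (L / 2)).indicator fun u => g (chord L u)

lemma windowed_bound {f : ℝ → ℝ} {C : ℝ} (hC : 0 ≤ C) (hf : ∀ x, |f x| * (1 + x ^ 2) ≤ C)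
    {L : ℝ} (hL : 0 < L) (u : ℝ) : |windowed f L u| ≤ 4 * C * (1 + u ^ 2)⁻¹ := by
  unfold windowed
  by_cases hu : u ∈ Set.Ioc (-(L / 2)) (L / 2)
  · rw [Set.indicator_of_mem hu]
    exact comp_chord_bound hf hL (abs_le.2 ⟨hu.1.le, hu.2⟩)
  · rw [Set.indicator_of_notMem hu, abs_zero]
    positivity

lemma measurable_windowed {f : ℝ → ℝ} (hf : Continuous f) (L : ℝ) :
    Measurable (windowed f L) :=
  (hf.comp (continuous_chord L)).measurable.indicator measurableSet_Ioc

lemma tendsto_windowed {f : ℝ → ℝ} (hf : Continuous f) (u : ℝ) :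
    Tendsto (fun L => windowed f L u) atTop (𝓝 (f u)) := by
  refine ((hf.tendsto u).comp (tendsto_chord u)).congr' ?_
  filter_upwards [eventually_gt_atTop (2 * |u|)] with L hL
  have h := abs_lt.1 (show |u| < L / 2 by linarith)
  rw [windowed, Set.indicator_of_mem (Set.mem_Ioc.2 ⟨h.1, h.2.le⟩)]
  rfl

lemma bound_of_schwartz {f : ℝ → ℝ} {C : ℝ} (hf : ∀ x, |f x| * (1 + x ^ 2) ≤ C) (u : ℝ) :
    |f u| ≤ C * (1 + u ^ 2)⁻¹ := by
  rw [← div_eq_mul_inv, le_div_iff₀ (by positivity)]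
  exact hf u

lemma tendsto_windowed_L1 (g : SchwartzMap ℝ ℝ) :
    Tendsto (fun L : ℝ => ∫ u, |windowed g L u - g u|) atTop (𝓝 0) := by
  obtain ⟨C, hC, H⟩ := schwartz_bound g
  have key := tendsto_integral_filter_of_dominated_convergence (μ := volume) (l := atTop)
    (F := fun (L : ℝ) u => |windowed g L u - g u|) (f := fun _ => (0 : ℝ))
    (fun u : ℝ => (5 * C) * (1 + u ^ 2)⁻¹) ?_ ?_ ?_ ?_
  · simpa using key
  · exact Eventually.of_forall fun L => (((measurable_windowed g.continuous L).sub
      g.continuous.measurable).abs).aestronglyMeasurable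
  · filter_upwards [eventually_gt_atTop 0] with L hL
    refine Eventually.of_forall fun u => ?_
    rw [Real.norm_eq_abs, abs_abs]
    have h1 := windowed_bound hC.le H hL u
    have h2 := bound_of_schwartz H u
    linarith [abs_sub (windowed g L u) (g u)]
  · exact integrable_inv_one_add_sq.const_mul _
  · refine Eventually.of_forall fun u => ?_
    have h := ((tendsto_windowed g.continuous u).sub_const (g u)).abs
    simpa using h

/-- The Fourier transform `∫ g(u) e^{2πisu} du` on the line. -/
noncomputable def fullCoeff (g : ℝ → ℝ) (s : ℝ) : ℂ := ∫ u, (g u : ℂ) * wave s u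

lemma continuous_fullCoeff (g : SchwartzMap ℝ ℝ) : Continuous (fullCoeff g) := by
  refine continuous_of_dominated (bound := fun u => |g u|) ?_ ?_ ?_ ?_
  · exact fun s => ((Complex.continuous_ofReal.comp g.continuous).mul
      (continuous_wave_left s)).aestronglyMeasurable
  · refine fun s => Eventually.of_forall fun u => ?_
    rw [norm_mul, norm_wave, mul_one, Complex.norm_real, Real.norm_eq_abs]
  · exact g.integrable.abs
  · refine Eventually.of_forall fun u => ?_
    unfold wave
    fun_prop

/-- The eigenvalues differ from samples of the Fourier transform by at most an `L¹` distance that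
does not depend on the frequency. -/
lemma norm_truncCoeff_sub_le (g : SchwartzMap ℝ ℝ) {L : ℝ} (hL : 0 < L) (s : ℝ) :
    ‖truncCoeff (fun u => g (chord L u)) L s - fullCoeff g s‖ ≤
      ∫ u, |windowed g L u - g u| := by
  obtain ⟨C, hC, H⟩ := schwartz_bound g
  have hW : Integrable (windowed g L) :=
    (integrable_inv_one_add_sq.const_mul (4 * C)).mono'
      (measurable_windowed g.continuous L).aestronglyMeasurable
      (Eventually.of_forall fun u => windowed_bound hC.le H hL u)
  have mulw : ∀ {f : ℝ → ℝ}, Integrable f → Integrable fun u => (f u : ℂ) * wave s u :=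
    fun hf => hf.ofReal.mul_bdd (c := 1) (continuous_wave_left s).aestronglyMeasurable
      (Eventually.of_forall fun u => (norm_wave s u).le)
  have e : truncCoeff (fun u => g (chord L u)) L s = ∫ u, (windowed g L u : ℂ) * wave s u := by
    rw [truncCoeff, intervalIntegral.integral_of_le (by linarith),
      ← integral_indicator measurableSet_Ioc]
    congr 1
    ext u
    unfold windowed
    by_cases hu : u ∈ Set.Ioc (-(L / 2)) (L / 2)
    · simp only [Set.indicator_of_mem hu]
    · simp only [Set.indicator_of_notMem hu, Complex.ofReal_zero, zero_mul]
  rw [e, fullCoeff, ← integral_sub (mulw hW) (mulw g.integrable)]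
  refine (norm_integral_le_integral_norm _).trans (le_of_eq ?_)
  congr 1
  ext u
  rw [← sub_mul, norm_mul, norm_wave, mul_one, ← Complex.ofReal_sub, Complex.norm_real,
    Real.norm_eq_abs]

/-! ### Riemann sums as integrals of step functions -/

/-- A series over `ℤ` with weight `1/L` is the integral of the associated step function of
mesh `1/L`. -/
lemma integral_floor {φ : ℤ → ℂ} {L : ℝ} (hL : 0 < L)
    (hφ : Integrable fun s : ℝ => φ ⌊L * s⌋) :
    ∫ s : ℝ, φ ⌊L * s⌋ = (1 / (L : ℂ)) * ∑' p, φ p := by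
  have hint : Integrable fun x : ℝ => φ ⌊x⌋ :=
    (integrable_comp_mul_left_iff (fun x : ℝ => φ ⌊x⌋) hL.ne').1 hφ
  have hs := hint.hasSum_intervalIntegral 0
  have hp : ∀ p : ℤ, ∫ x in (0 + (p : ℝ))..(0 + p + 1), φ ⌊x⌋ = φ p := fun p => by
    rw [intervalIntegral.integral_congr_Ioo_of_le (g := fun _ => φ p) (by linarith)]
    · simp
    · intro x hx
      rw [zero_add] at hx
      exact congrArg φ (Int.floor_eq_iff.2 ⟨hx.1.le, hx.2⟩)
  simp only [hp] at hs
  rw [Measure.integral_comp_mul_left (fun x : ℝ => φ ⌊x⌋) L, hs.tsum_eq, abs_of_pos (by positivity),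
    Complex.real_smul]
  simp

lemma abs_floor_div_sub_le {L : ℝ} (hL : 0 < L) (s : ℝ) :
    |(⌊L * s⌋ : ℝ) / L - s| ≤ 1 / L := by
  have h1 := Int.floor_le (L * s)
  have h2 := Int.lt_floor_add_one (L * s)
  have : (⌊L * s⌋ : ℝ) / L - s = (⌊L * s⌋ - L * s) / L := by field_simp
  rw [this, abs_div, abs_of_pos hL]
  gcongr
  rw [abs_le]
  constructor <;> linarith

lemma tendsto_floor_div (s : ℝ) :
    Tendsto (fun L : ℝ => (⌊L * s⌋ : ℝ) / L) atTop (𝓝 s) := by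
  rw [tendsto_iff_norm_sub_tendsto_zero]
  refine squeeze_zero' (Eventually.of_forall fun _ => norm_nonneg _) ?_
    (tendsto_const_nhds.div_atTop tendsto_id : Tendsto (fun L : ℝ => 1 / L) atTop (𝓝 0))
  filter_upwards [eventually_gt_atTop 0] with L hL
  exact abs_floor_div_sub_le hL s

/-- The substitution `u = Lt` in the integral defining the eigenvalue. -/
lemma lamL_eq_truncCoeff (g : ℝ → ℝ) {L : ℝ} (hL : 0 < L) (p : ℤ) :
    (L : ℂ) * ∫ t in (-(1/2) : ℝ)..(1/2 : ℝ),
        (g ((L / Real.pi) * Real.sin (Real.pi * t)) : ℂ) *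
          Complex.exp (2 * Real.pi * Complex.I * (p : ℂ) * (t : ℂ)) =
      truncCoeff (fun u => g (chord L u)) L (p / L) := by
  have h := intervalIntegral.smul_integral_comp_mul_left (a := -(1/2)) (b := 1/2)
    (fun u => (g (chord L u) : ℂ) * wave (p / L) u) L
  rw [Complex.real_smul] at h
  rw [truncCoeff, show -(L / 2) = L * -(1 / 2) by ring, show L / 2 = L * (1 / 2) by ring, ← h]
  congr 2
  ext t
  have hL' : (L : ℂ) ≠ 0 := by exact_mod_cast hL.ne'
  unfold chord wave
  rw [mul_div_cancel_left₀ t hL.ne']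
  congr 2
  push_cast
  field_simp

/-! ### The thermodynamic limit -/

/-- thermodynamic limit of the correlation kernel on the continuum: in the setting
of the continuum circulant `L`-ensemble with even Schwartz symbol `g`, nonnegative Fourier
transform `λ^∞`, fugacity `z > 0`, and eigenvalues `λ_p^{(L)}` with `1 + zλ_p^{(L)} > 0`, for all
real `X, Y`:
`lim_{L→∞} (z/L) Σ_{p∈ℤ} e^{2πi(Y-X)p/L} λ_p^{(L)}/(1 + zλ_p^{(L)})
  = z ∫_{-∞}^∞ e^{2πi(Y-X)s} λ^∞(s)/(1 + zλ^∞(s)) ds`. -/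
theorem continuum_thermodynamic_limit_kernel (g : SchwartzMap ℝ ℝ)
    (hg_even : ∀ u : ℝ, g (-u) = g u)
    (laminf : ℝ → ℝ)
    (hlaminf : ∀ s : ℝ, (laminf s : ℂ) =
      ∫ t : ℝ, (g t : ℂ) * Complex.exp (2 * Real.pi * Complex.I * (s : ℂ) * (t : ℂ)))
    (hlaminf_pos : ∀ s : ℝ, 0 ≤ laminf s)
    (z : ℝ) (hz : 0 < z)
    (lamL : ℝ → ℤ → ℝ)
    (hlamL : ∀ (L : ℝ) (p : ℤ), (lamL L p : ℂ) =
      (L : ℂ) * ∫ t in (-(1/2) : ℝ)..(1/2 : ℝ),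
        (g ((L / Real.pi) * Real.sin (Real.pi * t)) : ℂ) *
          Complex.exp (2 * Real.pi * Complex.I * (p : ℂ) * (t : ℂ)))
    (hpos : ∀ L : ℝ, 0 < L → ∀ p : ℤ, 0 < 1 + z * lamL L p)
    (X Y : ℝ) :
    Tendsto (fun L : ℝ =>
        ((z : ℂ) / (L : ℂ)) * ∑' p : ℤ,
          Complex.exp (2 * Real.pi * Complex.I * ((Y : ℂ) - (X : ℂ)) * (p : ℂ) / (L : ℂ)) *
            (lamL L p : ℂ) / (1 + (z : ℂ) * (lamL L p : ℂ)))
      atTop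
      (𝓝 ((z : ℂ) * ∫ s : ℝ,
          Complex.exp (2 * Real.pi * Complex.I * ((Y : ℂ) - (X : ℂ)) * (s : ℂ)) *
            (laminf s : ℂ) / (1 + (z : ℂ) * (laminf s : ℂ)))) := by
  have hinf : ∀ s, (laminf s : ℂ) = fullCoeff g s := hlaminf
  have hfin : ∀ L : ℝ, 0 < L → ∀ p : ℤ,
      (lamL L p : ℂ) = truncCoeff (fun u => g (chord L u)) L (p / L) := fun L hL p => by
    rw [hlamL, lamL_eq_truncCoeff g hL p]
  set ε : ℝ → ℝ := fun L => ∫ u, |windowed g L u - g u| with hε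
  have hε0 : Tendsto ε atTop (𝓝 0) := tendsto_windowed_L1 g
  have hclose : ∀ L : ℝ, 0 < L → ∀ p : ℤ, |lamL L p - laminf (p / L)| ≤ ε L := fun L hL p => by
    have h := norm_truncCoeff_sub_le g hL (p / L)
    rwa [← hfin L hL p, ← hinf, ← Complex.ofReal_sub, Complex.norm_real] at h
  have hcont : Continuous laminf := by
    have h := Complex.continuous_re.comp (continuous_fullCoeff g)
    refine h.congr fun s => ?_
    rw [Function.comp_apply, ← hinf, Complex.ofReal_re]
  obtain ⟨K, hK, hdecay⟩ := truncCoeff_decay g hg_even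
  have hdec : ∀ L : ℝ, 1 ≤ L → ∀ p : ℤ, |lamL L p| * (1 + ((p : ℝ) / L) ^ 2) ≤ K :=
    fun L hL p => by
      have h := hdecay L hL p
      rwa [← hfin L (by linarith) p, Complex.norm_real] at h
  -- once `ε L` is small, the denominators are at least `1/2`, uniformly in `p`
  have hden : ∀ᶠ L : ℝ in atTop, ∀ p : ℤ, 1 / 2 ≤ 1 + z * lamL L p := by
    filter_upwards [hε0.eventually (gt_mem_nhds (show 0 < 1 / (2 * z) by positivity)),
      eventually_gt_atTop 0] with L hL hL0 p
    have h1 := (abs_le.1 (hclose L hL0 p)).1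
    have h2 := hlaminf_pos (p / L)
    have h3 : z * (1 / (2 * z)) = 1 / 2 := by field_simp
    have h4 : -(1 / (2 * z)) ≤ lamL L p := by linarith
    nlinarith [mul_le_mul_of_nonneg_left h4 hz.le]
  set Φ : ℝ → ℤ → ℂ := fun L p =>
    wave (Y - X) (p / L) * (lamL L p : ℂ) / (1 + (z : ℂ) * (lamL L p : ℂ)) with hΦ
  have hmeas : ∀ L : ℝ, AEStronglyMeasurable (fun s : ℝ => Φ L ⌊L * s⌋) volume := fun L =>
    ((measurable_of_countable (Φ L)).comp
      (Int.measurable_floor.comp (measurable_const_mul L))).aestronglyMeasurable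
  have hbound : ∀ᶠ L : ℝ in atTop, ∀ s : ℝ, ‖Φ L ⌊L * s⌋‖ ≤ 6 * K * (1 + s ^ 2)⁻¹ := by
    filter_upwards [hden, eventually_ge_atTop 1] with L hL hL1 s
    have hL0 : 0 < L := by linarith
    set p := ⌊L * s⌋
    have h1 := hL p
    have h2 := hdec L hL1 p
    have hd : ‖(1 + (z : ℂ) * (lamL L p : ℂ))‖ = 1 + z * lamL L p := by
      rw [← Complex.ofReal_mul, ← Complex.ofReal_one, ← Complex.ofReal_add, Complex.norm_real,
        Real.norm_eq_abs, abs_of_pos (by linarith)]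
    have h3 : ‖Φ L p‖ ≤ 2 * |lamL L p| := by
      rw [hΦ]
      simp only [norm_div, norm_mul, norm_wave, one_mul, Complex.norm_real, Real.norm_eq_abs]
      rw [hd, div_le_iff₀ (by linarith)]
      nlinarith [abs_nonneg (lamL L p)]
    -- `s` and `p / L` differ by at most `1`
    have h4 : |(p : ℝ) / L - s| ≤ 1 :=
      (abs_floor_div_sub_le hL0 s).trans ((div_le_one hL0).2 hL1)
    have h5 : 1 + s ^ 2 ≤ 3 * (1 + ((p : ℝ) / L) ^ 2) := by
      have := abs_le.1 h4
      have h6 : ((p : ℝ) / L - s) ^ 2 ≤ 1 := (sq_le_one_iff_abs_le_one _).2 h4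
      nlinarith [sq_nonneg (2 * ((p : ℝ) / L) - s)]
    rw [← div_eq_mul_inv, le_div_iff₀ (by positivity)]
    nlinarith [abs_nonneg (lamL L p), norm_nonneg (Φ L p),
      mul_le_mul_of_nonneg_left h5 (abs_nonneg (lamL L p)),
      mul_le_mul_of_nonneg_right h3 (show 0 ≤ 1 + s ^ 2 by positivity)]
  have hbi : Integrable fun s : ℝ => 6 * K * (1 + s ^ 2)⁻¹ := integrable_inv_one_add_sq.const_mul _
  have hlim : ∀ s : ℝ, Tendsto (fun L : ℝ => Φ L ⌊L * s⌋) atTop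
      (𝓝 (wave (Y - X) s * (laminf s : ℂ) / (1 + (z : ℂ) * (laminf s : ℂ)))) := fun s => by
    have hf := tendsto_floor_div s
    have hlam : Tendsto (fun L : ℝ => lamL L ⌊L * s⌋) atTop (𝓝 (laminf s)) := by
      have h1 : Tendsto (fun L : ℝ => lamL L ⌊L * s⌋ - laminf (⌊L * s⌋ / L)) atTop (𝓝 0) := by
        refine squeeze_zero_norm' ?_ hε0
        filter_upwards [eventually_gt_atTop 0] with L hL
        exact hclose L hL _
      simpa using h1.add ((hcont.tendsto s).comp hf)
    have hlamC : Tendsto (fun L : ℝ => (lamL L ⌊L * s⌋ : ℂ)) atTop (𝓝 (laminf s : ℂ)) :=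
      (Complex.continuous_ofReal.tendsto _).comp hlam
    have hne : (1 + (z : ℂ) * (laminf s : ℂ)) ≠ 0 := by
      have h : (1 + z * laminf s) ≠ 0 := by have := hlaminf_pos s; positivity
      exact_mod_cast h
    exact ((((continuous_wave_left (Y - X)).tendsto s).comp hf).mul hlamC).div
      ((hlamC.const_mul (z : ℂ)).const_add 1) hne
  have key := (tendsto_integral_filter_of_dominated_convergence _
    (Eventually.of_forall hmeas) (hbound.mono fun L h => Eventually.of_forall h) hbi
    (Eventually.of_forall hlim)).const_mul (z : ℂ)
  have hgoal : (∫ s : ℝ,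
          Complex.exp (2 * Real.pi * Complex.I * ((Y : ℂ) - (X : ℂ)) * (s : ℂ)) *
            (laminf s : ℂ) / (1 + (z : ℂ) * (laminf s : ℂ))) =
      ∫ s : ℝ, wave (Y - X) s * (laminf s : ℂ) / (1 + (z : ℂ) * (laminf s : ℂ)) := by
    simp only [wave, Complex.ofReal_sub]
  rw [hgoal]
  refine key.congr' ?_
  filter_upwards [hbound, eventually_gt_atTop 0] with L hL hL0
  rw [integral_floor hL0 (hbi.mono' (hmeas L) (Eventually.of_forall hL)), ← mul_assoc, mul_one_div]
  congr 1
  refine tsum_congr fun p => ?_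
  simp only [hΦ, wave]
  push_cast
  rw [mul_div_assoc _ (p : ℂ) (L : ℂ)]
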